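/- Let N be a finite set of players with a distinguished platform player w_p ∈ N, and let a session be given by an owner map P : {0,1,…,n} → N (n ≥ 1) with P(0) = w_p and P(k) ≠ w_p for 1 ≤ k ≤ n, and revenues r : {1,…,n} → ℝ. Let ṽ be the single-session game under Assumptions 1 and 3. Then for every player i ∈ N, the Shapley value of i in ṽ equals Sh_i(ṽ) = Σ_{k=1}^{n} ([i ∈ {P(0),P(k)}] / 2) · r(k), where [i ∈ {P(0),P(k)}] is 1 if i ∈ {P(0),P(k)} and 0 otherwise. -/

import Mathlib

open Finset

/-! The game is a linear combination of unanimity games `u_T` with `T = {P 0, P k}`, and the Shapley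
value is linear, so everything reduces to `Sh_i(u_T) = [i ∈ T] / |T|`. For `i ∈ T`, the marginal
contribution of `i` to `F` in `u_T` is `1` exactly when `T \ {i} ⊆ F`; grouping these coalitions by
size leaves a sum of factorials which the hockey-stick identity evaluates. -/

open scoped Nat in
theorem sum_choose_mul_factorial_add_mul_factorial_sub (m t : ℕ) :
    (∑ j ∈ range (m + 1), m.choose j * ((t + j)! * (m - j)!)) * (t + 1) = (m + t + 1)! := by
  have hterm : ∀ j ∈ range (m + 1),
      m.choose j * ((t + j)! * (m - j)!) = (j + t).choose t * (m ! * t !) := by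
    intro j hj
    have hm := Nat.choose_mul_factorial_mul_factorial (Nat.lt_succ_iff.mp (mem_range.mp hj))
    have ht := Nat.add_choose_mul_factorial_mul_factorial j t
    rw [← hm, add_comm t j, ← ht]
    ring
  calc (∑ j ∈ range (m + 1), m.choose j * ((t + j)! * (m - j)!)) * (t + 1)
      = (m + t + 1).choose (t + 1) * (m ! * t !) * (t + 1) := by
        rw [sum_congr rfl hterm, ← sum_mul, Nat.sum_range_add_choose]
    _ = (m + (t + 1)).choose (t + 1) * m ! * (t + 1)! := by
        rw [Nat.factorial_succ t, ← add_assoc]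
        ring
    _ = (m + t + 1)! := Nat.add_choose_mul_factorial_mul_factorial m (t + 1)

theorem sum_Icc_finset_apply_card {α M : Type*} [DecidableEq α] [AddCommMonoid M]
    {S A : Finset α} (hSA : S ⊆ A) (f : ℕ → M) :
    ∑ F ∈ Icc S A, f #F
      = ∑ j ∈ range (#(A \ S) + 1), (#(A \ S)).choose j • f (#S + j) := by
  have hdisj : ∀ G ∈ (A \ S).powerset, Disjoint S G := fun G hG ↦
    disjoint_sdiff.mono_right (mem_powerset.mp hG)
  have hinj : Set.InjOn (S ∪ ·) ((A \ S).powerset : Set (Finset α)) := by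
    intro G hG H hH hGH
    rw [← union_sdiff_cancel_left (hdisj G hG), ← union_sdiff_cancel_left (hdisj H hH)]
    exact congrArg (· \ S) hGH
  calc ∑ F ∈ Icc S A, f #F = ∑ G ∈ (A \ S).powerset, f #(S ∪ G) := by
        rw [Icc_eq_image_powerset hSA, sum_image hinj]
    _ = ∑ G ∈ (A \ S).powerset, f (#S + #G) :=
        sum_congr rfl fun G hG ↦ by rw [card_union_of_disjoint (hdisj G hG)]
    _ = _ := sum_powerset_apply_card fun j ↦ f (#S + j)

section Shapley

open scoped Nat

variable (K : Type*) [Field K]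

/-- The weight in the Shapley value of a marginal contribution to a coalition of size `s` among `n`
players: for `s < n`, the probability that a uniformly random ordering of the players puts exactly
that coalition before a given player outside it. -/
def shapleyWeight (n s : ℕ) : K :=
  (s ! * (n - s - 1)! : K) / n !

theorem sum_choose_smul_shapleyWeight [CharZero K] (m t : ℕ) :
    ∑ j ∈ range (m + 1), m.choose j • shapleyWeight K (m + t + 1) (t + j) = 1 / (t + 1) := by
  have hterm : ∀ j ∈ range (m + 1), m.choose j • shapleyWeight K (m + t + 1) (t + j)
      = ((m.choose j * ((t + j)! * (m - j)!) : ℕ) : K)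
        / (m + t + 1)! := by
    intro j _
    have hsub : m + t + 1 - (t + j) - 1 = m - j := by lia
    rw [shapleyWeight, hsub, nsmul_eq_mul, mul_div_assoc']
    push_cast
    rfl
  have ht : (t + 1 : K) ≠ 0 := Nat.cast_add_one_ne_zero t
  have hfact : ((m + t + 1)! : K) ≠ 0 := Nat.cast_ne_zero.mpr (Nat.factorial_ne_zero _)
  rw [sum_congr rfl hterm, ← sum_div, ← Nat.cast_sum, div_eq_div_iff hfact ht, one_mul]
  exact_mod_cast sum_choose_mul_factorial_add_mul_factorial_sub m t

variable {K} {N : Type*} [DecidableEq N]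

/-- The Shapley value of player `i`: the weighted average of the marginal contributions of `i`. It
is bundled as a linear functional on all of `Finset N → K`: games need not vanish at `∅`. -/
def shapleyValue [Fintype N] (i : N) : (Finset N → K) →ₗ[K] K where
  toFun v := ∑ F ∈ (univ.erase i).powerset,
    shapleyWeight K (Fintype.card N) #F * (v (insert i F) - v F)
  map_add' v w := by
    rw [← sum_add_distrib]
    refine sum_congr rfl fun F _ ↦ ?_
    simp only [Pi.add_apply]
    ring
  map_smul' c v := by
    rw [RingHom.id_apply, smul_eq_mul, mul_sum]
    refine sum_congr rfl fun F _ ↦ ?_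
    simp only [Pi.smul_apply, smul_eq_mul]
    ring

theorem shapleyValue_apply [Fintype N] (i : N) (v : Finset N → K) :
    shapleyValue i v = ∑ F ∈ (univ.erase i).powerset,
      shapleyWeight K (Fintype.card N) #F * (v (insert i F) - v F) :=
  rfl

variable (K) in
/-- The unanimity game of `T`: a coalition earns `1` if it contains all of `T`,
and `0` otherwise. A session pays out a linear combination of these. -/
def unanimityGame (T : Finset N) : Finset N → K :=
  fun F ↦ if T ⊆ F then 1 else 0

theorem unanimityGame_insert_of_notMem {T : Finset N} {i : N} (hi : i ∉ T) (F : Finset N) :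
    unanimityGame K T (insert i F) = unanimityGame K T F := by
  simp only [unanimityGame, subset_insert_iff_of_notMem hi]

theorem unanimityGame_insert_sub_of_mem {T F : Finset N} {i : N} (hiT : i ∈ T) (hiF : i ∉ F) :
    unanimityGame K T (insert i F) - unanimityGame K T F = if T.erase i ⊆ F then 1 else 0 := by
  have hTF : ¬T ⊆ F := fun h ↦ hiF (h hiT)
  simp only [unanimityGame, subset_insert_iff, if_neg hTF, sub_zero]

variable [Fintype N]

theorem shapleyValue_unanimityGame_of_notMem {T : Finset N} {i : N} (hi : i ∉ T) :
    shapleyValue i (unanimityGame K T) = 0 := by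
  simp only [shapleyValue_apply, unanimityGame_insert_of_notMem hi, sub_self, mul_zero,
    sum_const_zero]

theorem shapleyValue_unanimityGame_of_mem [CharZero K] {T : Finset N} {i : N} (hi : i ∈ T) :
    shapleyValue i (unanimityGame K T) = 1 / #T := by
  have hsub : T.erase i ⊆ univ.erase i := erase_subset_erase i (subset_univ T)
  have hT : #(T.erase i) + 1 = #T := card_erase_add_one hi
  have hN : #(univ.erase i \ T.erase i) + #(T.erase i) + 1 = Fintype.card N := by
    rw [card_sdiff_add_card_eq_card hsub, card_erase_add_one (mem_univ i), card_univ]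
  calc shapleyValue i (unanimityGame K T)
      = ∑ F ∈ (univ.erase i).powerset,
          if T.erase i ⊆ F then shapleyWeight K (Fintype.card N) #F else 0 := by
        refine sum_congr rfl fun F hF ↦ ?_
        have hiF : i ∉ F := (subset_erase.mp (mem_powerset.mp hF)).2
        rw [unanimityGame_insert_sub_of_mem hi hiF, mul_ite, mul_one, mul_zero]
    _ = ∑ F ∈ Icc (T.erase i) (univ.erase i), shapleyWeight K (Fintype.card N) #F := by
        rw [← sum_filter]
        refine sum_congr ?_ fun _ _ ↦ rfl
        ext F
        simp only [mem_filter, mem_powerset, mem_Icc, and_comm]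
    _ = 1 / (#(T.erase i) + 1) := by
        rw [sum_Icc_finset_apply_card hsub, ← hN, sum_choose_smul_shapleyWeight]
    _ = 1 / #T := by rw [← hT, Nat.cast_add_one]

/-- For `T = ∅` the right-hand side is `0 / 0 = 0`, which is correct since `u_∅` is constant. -/
theorem shapleyValue_unanimityGame [CharZero K] (T : Finset N) (i : N) :
    shapleyValue i (unanimityGame K T) = (if i ∈ T then 1 else 0) / #T := by
  split_ifs with hi
  · exact shapleyValue_unanimityGame_of_mem hi
  · rw [shapleyValue_unanimityGame_of_notMem hi, zero_div]

end Shapley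

/-- For the single-session game `ṽ` under Assumptions 1 and 3, the
Shapley value of player `i` equals `Σ_{k=1}^{n} ([i ∈ {P(0),P(k)}] / 2) · r(k)`. -/
theorem shapley_value_single_session_A13
    {N : Type*} [Fintype N] [DecidableEq N]
    (wp : N) (n : ℕ) (hn : 1 ≤ n) (P : ℕ → N) (r : ℕ → ℝ)
    (hP0 : P 0 = wp)
    (hPk : ∀ k, 1 ≤ k → k ≤ n → P k ≠ wp)
    (vt : Finset N → ℝ)
    (hvt : ∀ F : Finset N, vt F = ∑ k ∈ Finset.Icc 1 n,
      if ({P 0, P k} : Finset N) ⊆ F then r k else 0)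
    (i : N) :
    (∑ F ∈ (Finset.univ.erase i).powerset,
        ((F.card.factorial * (Fintype.card N - F.card - 1).factorial : ℝ) /
          (Fintype.card N).factorial) * (vt (insert i F) - vt F))
      = ∑ k ∈ Finset.Icc 1 n,
          (if i ∈ ({P 0, P k} : Finset N) then (1 : ℝ) else 0) / 2 * r k := by
  have hgame : vt = ∑ k ∈ Icc 1 n, r k • unanimityGame ℝ {P 0, P k} := by
    ext F
    simp only [hvt, Finset.sum_apply, Pi.smul_apply, unanimityGame, smul_eq_mul, mul_ite, mul_one,
      mul_zero]
  change shapleyValue i vt = _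
  rw [hgame, map_sum]
  refine sum_congr rfl fun k hk ↦ ?_
  obtain ⟨hk₁, hkn⟩ := mem_Icc.mp hk
  have hcard : #{P 0, P k} = 2 := card_pair (hP0 ▸ (hPk k hk₁ hkn).symm)
  rw [map_smul, shapleyValue_unanimityGame, hcard, Nat.cast_ofNat, smul_eq_mul, mul_comm]
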